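/- arXiv:1902.04301 — 4 statements merged into one kernel-verified Lean document; each statement's English description precedes it below -/
import Mathlib

section
/- Let ω_1 > ω_2 > 0 be real numbers. Then the functions τ ↦ ω_2 τ sin τ and τ ↦ ω_1 are not integrally separated: there do not exist constants a > 0 and D ∈ ℝ such that ∫_s^t (ω_1 − ω_2 τ sin τ) dτ ≥ a(t − s) + D for all 0 ≤ s ≤ t. -/
/-!
The integrand has the antiderivative `ω₁ τ - ω₂ (sin τ - τ cos τ)`. Over the `k`-th positive half-wave
`[2kπ, 2kπ + π]` of the sine, the integral is therefore `(ω₁ - ω₂) π - 4 k π ω₂`, which tends to `-∞`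
with `k`, whereas integral separation would bound it below by the constant `a π + D`.
-/

lemma integral_half_wave (ω₁ ω₂ : ℝ) (k : ℕ) :
    ∫ τ in (k * (2 * Real.pi))..(k * (2 * Real.pi) + Real.pi), (ω₁ - ω₂ * τ * Real.sin τ)
      = (ω₁ - ω₂) * Real.pi - 4 * k * Real.pi * ω₂ := by
  have hderiv : ∀ x : ℝ, HasDerivAt
      (fun τ : ℝ => ω₁ * τ - ω₂ * (Real.sin τ - τ * Real.cos τ))
      (ω₁ - ω₂ * x * Real.sin x) x := by
    intro x
    have h := ((hasDerivAt_id x).const_mul ω₁).sub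
      (((Real.hasDerivAt_sin x).sub ((hasDerivAt_id x).mul (Real.hasDerivAt_cos x))).const_mul ω₂)
    refine h.congr_deriv ?_
    simp only [id]
    ring
  have hcont : Continuous fun τ : ℝ => ω₁ - ω₂ * τ * Real.sin τ := by fun_prop
  rw [intervalIntegral.integral_eq_sub_of_hasDerivAt (fun x _ => hderiv x)
    (hcont.intervalIntegrable _ _)]
  have hs : Real.sin (k * (2 * Real.pi)) = 0 := by
    simpa using Real.sin_add_nat_mul_two_pi 0 k
  rw [Real.sin_add_pi, Real.cos_add_pi, hs, Real.cos_nat_mul_two_pi]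
  ring

theorem not_integrally_separated
    (ω₁ ω₂ : ℝ) (h₁ : ω₂ < ω₁) (h₂ : 0 < ω₂) :
    ¬ ∃ a : ℝ, 0 < a ∧ ∃ D : ℝ, ∀ s t : ℝ, 0 ≤ s → s ≤ t →
        a * (t - s) + D ≤ ∫ τ in s..t, (ω₁ - ω₂ * τ * Real.sin τ) := by
  rintro ⟨a, -, D, h⟩
  have hπ := Real.pi_pos
  have hc : 0 < 4 * Real.pi * ω₂ := by positivity
  -- `k` is chosen so that `(ω₁ - ω₂) π - 4 k π ω₂ < a π + D`.
  obtain ⟨k, hk⟩ := exists_nat_gt (((ω₁ - ω₂ - a) * Real.pi - D) / (4 * Real.pi * ω₂))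
  rw [div_lt_iff₀ hc] at hk
  have hle := h (k * (2 * Real.pi)) (k * (2 * Real.pi) + Real.pi) (by positivity) (by linarith)
  rw [integral_half_wave] at hle
  linarith
end

section
/- For all 0 ≤ s ≤ t, ∫_s^t (2 − τ sin τ) dτ ≥ (t − s) − 2s − 2. Consequently, for nonzero solutions x_1 of ẋ_1 = (2 − 2t sin t)x_1 and x_2 of ẋ_2 = (4 − 3t sin t)x_2 one has (|x_2(t)|/|x_2(s)|)·(|x_1(s)|/|x_1(t)|) ≥ e^{(t−s) − 2s − 2} for all 0 ≤ s ≤ t, so the coefficient functions t ↦ 2 − 2t sin t and t ↦ 4 − 3t sin t are weakly integrally separated. -/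
/-!
The function `P τ = 2 τ + τ cos τ - sin τ` is an antiderivative of `2 - τ sin τ`, and
`|cos|, |sin| ≤ 1` give `P t - P s ≥ 2 (t - s) - t - s - 2 = (t - s) - 2 s - 2` for `0 ≤ s ≤ t`
(`primitive_sub_ge`). Since `(4 - 3 t sin t) - (2 - 2 t sin t) = 2 - t sin t`, the quotient
`x₂ / x₁` of two nonvanishing solutions is a multiple of `exp P` (`eq_mul_exp_of_hasDerivAt`), and
the same lower bound yields both the growth estimate and the weak integral separation, with
`a = 1`, `b = 2`, `D = -2`.
-/

noncomputable section

/-- Two continuous functions `g₁, g₂ : [0,∞) → ℝ` are weakly integrally separated. -/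
def WeakIntSepPair (g₁ g₂ : ℝ → ℝ) : Prop :=
  ∃ a ≥ (0:ℝ), ∃ b ≥ (0:ℝ), ∃ D : ℝ, ∀ s t : ℝ, 0 ≤ s → s ≤ t →
    a * (t - s) - b * s + D ≤ ∫ τ in s..t, (g₂ τ - g₁ τ)

/-- The antiderivative `2 τ + τ cos τ - sin τ` of `2 - τ sin τ`. -/
def primitive (τ : ℝ) : ℝ := 2 * τ + τ * Real.cos τ - Real.sin τ

lemma hasDerivAt_primitive (τ : ℝ) : HasDerivAt primitive (2 - τ * Real.sin τ) τ := by
  have h := (((hasDerivAt_id τ).const_mul 2).add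
    ((hasDerivAt_id τ).mul (Real.hasDerivAt_cos τ))).sub (Real.hasDerivAt_sin τ)
  refine h.congr_deriv ?_
  simp only [id]
  ring

lemma integral_eq_primitive_sub (s t : ℝ) :
    ∫ τ in s..t, (2 - τ * Real.sin τ) = primitive t - primitive s :=
  intervalIntegral.integral_eq_sub_of_hasDerivAt (fun τ _ => hasDerivAt_primitive τ)
    (Continuous.intervalIntegrable (by fun_prop) s t)

lemma primitive_sub_ge {s t : ℝ} (hs : 0 ≤ s) (hst : s ≤ t) :
    (t - s) - 2 * s - 2 ≤ primitive t - primitive s := by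
  have h₁ : -t ≤ t * Real.cos t := by nlinarith [Real.neg_one_le_cos t]
  have h₂ : s * Real.cos s ≤ s := by nlinarith [Real.cos_le_one s]
  have h₃ := Real.sin_le_one t
  have h₄ := Real.neg_one_le_sin s
  unfold primitive
  linarith

/-- Solutions of the scalar linear equation `x' = g x` are multiples of `exp G` for any
antiderivative `G` of `g`, because `x exp (-G)` has zero derivative. -/
lemma eq_mul_exp_of_hasDerivAt {x G g : ℝ → ℝ} (hG : ∀ t, HasDerivAt G (g t) t)
    (hx : ∀ t, HasDerivAt x (g t * x t) t) (s t : ℝ) :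
    x t = x s * Real.exp (G t - G s) := by
  have hd : ∀ t, HasDerivAt (fun u => x u * Real.exp (-G u)) 0 t := fun t =>
    ((hx t).mul (hG t).neg.exp).congr_deriv (by ring)
  have hc : x t * Real.exp (-G t) = x s * Real.exp (-G s) :=
    is_const_of_deriv_eq_zero (fun u => (hd u).differentiableAt) (fun u => (hd u).deriv) t s
  calc x t = x t * Real.exp (-G t) * Real.exp (G t) := by
        rw [mul_assoc, ← Real.exp_add]; simp
    _ = x s * Real.exp (G t - G s) := by
        rw [hc, mul_assoc, ← Real.exp_add]; ring_nf

theorem weak_integral_separation_overlapping_spectra_example :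
    (∀ s t : ℝ, 0 ≤ s → s ≤ t →
      (t - s) - 2 * s - 2 ≤ ∫ τ in s..t, (2 - τ * Real.sin τ)) ∧
    (∀ x₁ x₂ : ℝ → ℝ,
      (∀ t : ℝ, HasDerivAt x₁ ((2 - 2 * t * Real.sin t) * x₁ t) t) →
      (∀ t : ℝ, HasDerivAt x₂ ((4 - 3 * t * Real.sin t) * x₂ t) t) →
      (∀ t : ℝ, x₁ t ≠ 0) → (∀ t : ℝ, x₂ t ≠ 0) →
      ∀ s t : ℝ, 0 ≤ s → s ≤ t →
        Real.exp ((t - s) - 2 * s - 2) ≤ (|x₂ t| / |x₂ s|) * (|x₁ s| / |x₁ t|)) ∧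
    WeakIntSepPair (fun t => 2 - 2 * t * Real.sin t)
      (fun t => 4 - 3 * t * Real.sin t) := by
  refine ⟨fun s t hs hst => ?_, fun x₁ x₂ h₁ h₂ hx₁ hx₂ s t hs hst => ?_,
    1, zero_le_one, 2, zero_le_two, -2, fun s t hs hst => ?_⟩
  · rw [integral_eq_primitive_sub]
    exact primitive_sub_ge hs hst
  · have hq : ∀ u, HasDerivAt (fun u => x₂ u / x₁ u)
        ((2 - u * Real.sin u) * (x₂ u / x₁ u)) u := fun u => by
      refine ((h₂ u).div (h₁ u) (hx₁ u)).congr_deriv ?_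
      have := hx₁ u
      field_simp
      ring
    have hq_exp : x₂ t / x₁ t = x₂ s / x₁ s * Real.exp (primitive t - primitive s) :=
      eq_mul_exp_of_hasDerivAt hasDerivAt_primitive hq s t
    have hratio : |x₂ t| / |x₂ s| * (|x₁ s| / |x₁ t|) =
        Real.exp (primitive t - primitive s) := by
      have e : x₂ t / x₂ s * (x₁ s / x₁ t) = Real.exp (primitive t - primitive s) := by
        calc x₂ t / x₂ s * (x₁ s / x₁ t) = x₂ t / x₁ t * (x₁ s / x₂ s) := by ring
          _ = Real.exp (primitive t - primitive s) := by
            rw [hq_exp]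
            have := hx₁ s
            have := hx₂ s
            field_simp
      rw [← abs_div, ← abs_div, ← abs_mul, e, Real.abs_exp]
    rw [hratio]
    exact Real.exp_le_exp.mpr (primitive_sub_ge hs hst)
  · have e : ∀ τ : ℝ, (4 - 3 * τ * Real.sin τ) - (2 - 2 * τ * Real.sin τ) =
        2 - τ * Real.sin τ := fun τ => by ring
    simp only [e]
    rw [integral_eq_primitive_sub]
    linarith [primitive_sub_ge hs hst]

end
end

section
/- Let u, v : [0,∞) → (0,∞), let λ ∈ ℝ, M > 0, α > 0 and ε ∈ [0,α), and suppose that (u(t)/u(s)) e^{−λ(t−s)} ≤ M e^{−α(t−s)} e^{ε s} for all 0 ≤ s ≤ t, and that (v(t)/v(s)) e^{−λ(t−s)} ≤ M e^{α(t−s)} e^{ε s} for all 0 ≤ t ≤ s. Then for all 0 ≤ s ≤ t, (v(t)/v(s))·(u(s)/u(t)) ≥ M^{−2} e^{(2α−ε)(t−s)} e^{−2ε s}. In particular, u and v are weakly integrally separated in the ratio sense with constants D = M^{−2}, a = 2α − ε > 0 and b = 2ε. -/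
/-!
Multiply the contraction estimate for `u` from `s` to `t` by the backward estimate for `v` from `t`
to `s`. The shift by `lam` drops out, which bounds `(u t / u s) * (v s / v t)` by
`M ^ 2 * exp (-2α(t - s) + ε s + ε t)`. Since `t = (t - s) + s`, the exponent equals
`-(2α - ε)(t - s) + 2ε s`, and taking reciprocals of positive numbers gives the claim.
-/


theorem dichotomy_of_shifted_system_forces_weak_integral_separation
    (u v : ℝ → ℝ)
    (hu : ∀ t ∈ Set.Ici (0:ℝ), 0 < u t) (hv : ∀ t ∈ Set.Ici (0:ℝ), 0 < v t)
    (lam M α ε : ℝ) (hM : 0 < M) (hα : 0 < α) (hε : 0 ≤ ε) (hεα : ε < α)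
    (h₁ : ∀ s t : ℝ, 0 ≤ s → s ≤ t →
      (u t / u s) * Real.exp (-lam * (t - s)) ≤
        M * Real.exp (-α * (t - s)) * Real.exp (ε * s))
    (h₂ : ∀ s t : ℝ, 0 ≤ t → t ≤ s →
      (v t / v s) * Real.exp (-lam * (t - s)) ≤
        M * Real.exp (α * (t - s)) * Real.exp (ε * s)) :
    0 < 2 * α - ε ∧
    ∀ s t : ℝ, 0 ≤ s → s ≤ t →
      M⁻¹ ^ 2 * Real.exp ((2 * α - ε) * (t - s)) * Real.exp (-(2 * ε) * s) ≤
        (v t / v s) * (u s / u t) := by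
  refine ⟨by linarith, fun s t hs hst => ?_⟩
  have hut := hu t (hs.trans hst)
  have hus := hu s hs
  have hvt := hv t (hs.trans hst)
  have hvs := hv s hs
  -- the shift factors `exp (∓lam * (t - s))` cancel in this product
  have hprod := mul_le_mul (h₁ s t hs hst) (h₂ t s hs hst) (by positivity) (by positivity)
  have hL : (u t / u s) * Real.exp (-lam * (t - s)) *
      ((v s / v t) * Real.exp (-lam * (s - t))) = (u t / u s) * (v s / v t) := by
    rw [mul_mul_mul_comm, ← Real.exp_add,
      show -lam * (t - s) + -lam * (s - t) = 0 by ring, Real.exp_zero, mul_one]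
  -- `ε * s + ε * t = ε * (t - s) + 2 * ε * s` produces the exponents of the claim
  have hR : M * Real.exp (-α * (t - s)) * Real.exp (ε * s) *
      (M * Real.exp (α * (s - t)) * Real.exp (ε * t)) =
      (M⁻¹ ^ 2 * Real.exp ((2 * α - ε) * (t - s)) * Real.exp (-(2 * ε) * s))⁻¹ := by
    rw [mul_inv, mul_inv, ← Real.exp_neg, ← Real.exp_neg, inv_pow, inv_inv]
    calc _ = M ^ 2 * Real.exp (-α * (t - s) + ε * s + (α * (s - t) + ε * t)) := by
          simp only [Real.exp_add]; ring
      _ = M ^ 2 * Real.exp (-((2 * α - ε) * (t - s)) + -(-(2 * ε) * s)) := by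
          congr 2; ring
      _ = _ := by rw [Real.exp_add]; ring
  rw [hL, hR] at hprod
  have hinv : (v t / v s) * (u s / u t) = ((u t / u s) * (v s / v t))⁻¹ := by
    rw [mul_inv, inv_div, inv_div, mul_comm]
  rw [hinv]
  exact (le_inv_comm₀ (by positivity) (by positivity)).1 hprod
end

section
/- Let a_1,…,a_n : [0,∞) → ℝ be continuous and suppose there are constants a, b ≥ 0 and D > 0 with ∫_s^t (a_{i+1}(τ) − a_i(τ)) dτ ≥ ln D + a(t−s) − b·s for all 0 ≤ s ≤ t and all i = 1,…,n−1. Suppose furthermore there exist an index k ∈ {1,…,n} and ε > 0 such that a_k(t) ≤ −ε for all t ≥ 0 and, if k < n, a_{k+1}(t) ≥ ε for all t ≥ 0. Then for every i ≤ k and all 0 ≤ s ≤ t: exp(∫_s^t a_i(τ) dτ) ≤ D^{−(k−i)} e^{−(ε + (k−i)a)(t−s)} e^{(k−i)b·s}; and for every i ≥ k+1 and all 0 ≤ t ≤ s: exp(∫_s^t a_i(τ) dτ) ≤ D^{−(i−k−1)} e^{(ε + (i−k−1)a)(t−s)} e^{(i−k−1)b·t}. In other words, each of the first k scalar equations ẋ_i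 = a_i(t)x_i admits a nonuniform exponential contraction and each of the last n−k admits a nonuniform exponential expansion. -/
/-!
Summing the separation inequality over the consecutive pairs between `i` and `i + m` gives
`m (log D + a₀ (t - s) - b₀ s) ≤ ∫ a (i + m) - ∫ a i` on `[s, t]`
(`nsmul_le_integral_sub_of_separation`). Comparing `a i` with `a k` when `i ≤ k`, and with
`a (k + 1)` when `k < i`, the pointwise bounds on these two reference coefficients yield upper
bounds for the exponents, which are then exponentiated.
-/

/-- The separation inequality telescoped over `m` consecutive indices. -/
lemma nsmul_le_integral_sub_of_separation {n : ℕ} {a : Fin n → ℝ → ℝ} {s t c : ℝ}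
    (hint : ∀ i, IntervalIntegrable (a i) MeasureTheory.volume s t)
    (hsep : ∀ i j : Fin n, (j : ℕ) = (i : ℕ) + 1 → c ≤ ∫ τ in s..t, (a j τ - a i τ))
    (m : ℕ) (i j : Fin n) (hij : (j : ℕ) = (i : ℕ) + m) :
    (m : ℝ) * c ≤ (∫ τ in s..t, a j τ) - ∫ τ in s..t, a i τ := by
  induction m generalizing j with
  | zero =>
    obtain rfl : j = i := Fin.ext hij
    simp
  | succ m ih =>
    have hlt : (i : ℕ) + m < n := by have := j.isLt; omega
    have h₁ := ih ⟨(i : ℕ) + m, hlt⟩ rfl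
    have h₂ := hsep ⟨(i : ℕ) + m, hlt⟩ j (by simp only; omega)
    rw [intervalIntegral.integral_sub (hint _) (hint _)] at h₂
    push_cast
    linarith

lemma exp_le_zpow_mul_exp_mul_exp {D x y z : ℝ} (hD : 0 < D) (m : ℕ)
    (h : x ≤ -(m * Real.log D) + y + z) :
    Real.exp x ≤ D ^ (-(m : ℤ)) * Real.exp y * Real.exp z := by
  have hpow : D ^ (-(m : ℤ)) = Real.exp (-(m * Real.log D)) := by
    rw [Real.exp_neg, Real.exp_nat_mul, Real.exp_log hD, zpow_neg, zpow_natCast]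
  rw [hpow, ← Real.exp_add, ← Real.exp_add]
  exact Real.exp_le_exp.mpr h


theorem nonuniform_contraction_and_expansion_from_weak_integral_separation
    (n : ℕ) (a : Fin n → ℝ → ℝ) (ha : ∀ i, ContinuousOn (a i) (Set.Ici 0))
    (a₀ b₀ D : ℝ) (ha₀ : 0 ≤ a₀) (hb₀ : 0 ≤ b₀) (hD : 0 < D)
    (hsep : ∀ i j : Fin n, (j : ℕ) = (i : ℕ) + 1 →
      ∀ s t : ℝ, 0 ≤ s → s ≤ t →
        Real.log D + a₀ * (t - s) - b₀ * s ≤ ∫ τ in s..t, (a j τ - a i τ))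
    (k : Fin n) (ε : ℝ) (hε : 0 < ε)
    (hk : ∀ t ∈ Set.Ici (0:ℝ), a k t ≤ -ε)
    (hk' : ∀ hkn : (k : ℕ) + 1 < n, ∀ t ∈ Set.Ici (0:ℝ),
      ε ≤ a ⟨(k : ℕ) + 1, hkn⟩ t) :
    (∀ i : Fin n, i ≤ k → ∀ s t : ℝ, 0 ≤ s → s ≤ t →
      Real.exp (∫ τ in s..t, a i τ) ≤
        D ^ (-(((k : ℕ) - (i : ℕ) : ℕ) : ℤ)) *
          Real.exp (-(ε + (((k : ℕ) - (i : ℕ) : ℕ) : ℝ) * a₀) * (t - s)) *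
          Real.exp ((((k : ℕ) - (i : ℕ) : ℕ) : ℝ) * b₀ * s)) ∧
    (∀ i : Fin n, k < i → ∀ s t : ℝ, 0 ≤ t → t ≤ s →
      Real.exp (∫ τ in s..t, a i τ) ≤
        D ^ (-(((i : ℕ) - (k : ℕ) - 1 : ℕ) : ℤ)) *
          Real.exp ((ε + (((i : ℕ) - (k : ℕ) - 1 : ℕ) : ℝ) * a₀) * (t - s)) *
          Real.exp ((((i : ℕ) - (k : ℕ) - 1 : ℕ) : ℝ) * b₀ * t)) := by
  have hint : ∀ i, ∀ s t : ℝ, 0 ≤ s → s ≤ t →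
      IntervalIntegrable (a i) MeasureTheory.volume s t := fun i s t hs hst =>
    ((ha i).mono fun x hx => hs.trans hx.1).intervalIntegrable_of_Icc hst
  constructor
  · intro i hik s t hs hst
    have hik' : (i : ℕ) ≤ k := hik
    have htel := nsmul_le_integral_sub_of_separation (fun i => hint i s t hs hst)
      (fun i j hij => hsep i j hij s t hs hst) ((k : ℕ) - i) i k (by omega)
    have hbd : ∫ τ in s..t, a k τ ≤ ∫ _ in s..t, -ε :=
      intervalIntegral.integral_mono_on hst (hint k s t hs hst) (by simp)
        fun x hx => hk x (hs.trans hx.1)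
    rw [intervalIntegral.integral_const, smul_eq_mul] at hbd
    apply exp_le_zpow_mul_exp_mul_exp hD
    linarith
  · intro i hki s t ht hts
    have hki' : (k : ℕ) < i := hki
    have hkn : (k : ℕ) + 1 < n := by have := i.isLt; omega
    have htel := nsmul_le_integral_sub_of_separation (fun i => hint i t s ht hts)
      (fun i j hij => hsep i j hij t s ht hts) ((i : ℕ) - k - 1) ⟨(k : ℕ) + 1, hkn⟩ i
      (by simp only; omega)
    have hbd : ∫ _ in t..s, ε ≤ ∫ τ in t..s, a ⟨(k : ℕ) + 1, hkn⟩ τ :=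
      intervalIntegral.integral_mono_on hts (by simp) (hint _ t s ht hts)
        fun x hx => hk' hkn x (ht.trans hx.1)
    rw [intervalIntegral.integral_const, smul_eq_mul] at hbd
    apply exp_le_zpow_mul_exp_mul_exp hD
    rw [intervalIntegral.integral_symm t s]
    linarith
end
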